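/- Let k ≥ 1 be an integer, let f : ℝ → ℝ be real-analytic on ℝ and not a polynomial of degree ≤ k, let x₀ ∈ ℝ, and let ℓ ≥ 1 be the smallest positive integer such that f^{(k+ℓ)}(x₀) ≠ 0. Then lim_{ε → 0⁺} (1/ε^ℓ)·(sup_{x ∈ (x₀, x₀+ε]} R_{k-1}(x; f, x₀)/(x - x₀)^k − inf_{x ∈ (x₀, x₀+ε]} R_{k-1}(x; f, x₀)/(x - x₀)^k) = |f^{(k+ℓ)}(x₀)| / (k+ℓ)!. -/

import Mathlib

/-!
With `c = f⁽ᵏ⁾(x₀)/k!` and `d = f⁽ᵏ⁺ˡ⁾(x₀)/(k+ℓ)!`, Taylor's theorem gives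
`R_{k-1}(x; f, x₀)/(x - x₀)ᵏ = c + d (x - x₀)^ℓ + o((x - x₀)^ℓ)`, because the coefficients strictly
between degrees `k` and `k + ℓ` vanish (`taylorRemainder_isLittleO`). On `(x₀, x₀ + ε]` the
function `c + d (x - x₀)^ℓ` fills the half-open interval from `c` (excluded) to `c + d ε^ℓ`, so its
supremum and infimum differ by `|d| ε^ℓ`; a relative error `η` in the expansion changes this by at
most `2 η ε^ℓ` (`abs_width_sub_le`).
-/

/-- Degree `k-1` Taylor remainder: `R_{k-1}(x; f, x₀) = f x - ∑_{i=0}^{k-1} f⁽ⁱ⁾(x₀)(x-x₀)^i/i!`. -/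
noncomputable def taylorRemainder (f : ℝ → ℝ) (x₀ : ℝ) (k : ℕ) (x : ℝ) : ℝ :=
  f x - ∑ i ∈ Finset.range k, iteratedDeriv i f x₀ * (x - x₀) ^ i / (i.factorial : ℝ)

open Filter Topology Set in
/-- If `g x` stays within `η (x - x₀)^ℓ` of `c + d (x - x₀)^ℓ` on `(x₀, x₀ + ε]`, then the width of
the range of `g` there is `|d| ε^ℓ` up to `2 η ε^ℓ`. -/
lemma abs_width_sub_le {g : ℝ → ℝ} {x₀ c d η ε : ℝ} {ℓ : ℕ} (hℓ : 1 ≤ ℓ) (hη : 0 ≤ η) (hε : 0 < ε)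
    (h : ∀ x ∈ Ioc x₀ (x₀ + ε), |g x - (c + d * (x - x₀) ^ ℓ)| ≤ η * (x - x₀) ^ ℓ) :
    |sSup (g '' Ioc x₀ (x₀ + ε)) - sInf (g '' Ioc x₀ (x₀ + ε)) - |d| * ε ^ ℓ| ≤ 2 * η * ε ^ ℓ := by
  set S := g '' Ioc x₀ (x₀ + ε) with hS
  have hend : x₀ + ε ∈ Ioc x₀ (x₀ + ε) := ⟨by linarith, le_rfl⟩
  have hne : S.Nonempty := ⟨_, mem_image_of_mem g hend⟩
  have hpow : 0 < ε ^ ℓ := pow_pos hε ℓ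
  have hbd : ∀ x ∈ Ioc x₀ (x₀ + ε), 0 ≤ (x - x₀) ^ ℓ ∧ (x - x₀) ^ ℓ ≤ ε ^ ℓ := fun x hx =>
    ⟨pow_nonneg (by linarith [hx.1]) ℓ,
      pow_le_pow_left₀ (by linarith [hx.1]) (by linarith [hx.2]) ℓ⟩
  have hub : ∀ y ∈ S, y ≤ c + (max d 0 + η) * ε ^ ℓ := by
    rintro _ ⟨x, hx, rfl⟩
    have h1 := (abs_le.1 (h x hx)).2
    obtain ⟨h2, h3⟩ := hbd x hx
    have h4 : d * (x - x₀) ^ ℓ ≤ max d 0 * (x - x₀) ^ ℓ :=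
      mul_le_mul_of_nonneg_right (le_max_left _ _) h2
    have h5 : (max d 0 + η) * (x - x₀) ^ ℓ ≤ (max d 0 + η) * ε ^ ℓ :=
      mul_le_mul_of_nonneg_left h3 (add_nonneg (le_max_right _ _) hη)
    linarith
  have hlb : ∀ y ∈ S, c + (min d 0 - η) * ε ^ ℓ ≤ y := by
    rintro _ ⟨x, hx, rfl⟩
    have h1 := (abs_le.1 (h x hx)).1
    obtain ⟨h2, h3⟩ := hbd x hx
    have h4 : min d 0 * (x - x₀) ^ ℓ ≤ d * (x - x₀) ^ ℓ :=
      mul_le_mul_of_nonneg_right (min_le_left _ _) h2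
    have h5 : (min d 0 - η) * ε ^ ℓ ≤ (min d 0 - η) * (x - x₀) ^ ℓ :=
      mul_le_mul_of_nonpos_left h3 (by linarith [min_le_right d 0])
    linarith
  have hA : BddAbove S := ⟨_, hub⟩
  have hB : BddBelow S := ⟨_, hlb⟩
  have hsup := csSup_le hne hub
  have hinf := le_csInf hne hlb
  have hgend := abs_le.1 (h _ hend)
  rw [add_sub_cancel_left] at hgend
  have hsup1 : c + (d - η) * ε ^ ℓ ≤ sSup S :=
    le_trans (by linarith [hgend.1]) (le_csSup hA (mem_image_of_mem g hend))
  have hinf1 : sInf S ≤ c + (d + η) * ε ^ ℓ :=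
    le_trans (csInf_le hB (mem_image_of_mem g hend)) (by linarith [hgend.2])
  -- `c` is a limit of values of `g` at the open left end, hence lies between `sInf S` and `sSup S`.
  have hmem : ∀ᶠ x in 𝓝[>] x₀, x ∈ Ioc x₀ (x₀ + ε) := Ioc_mem_nhdsGT (by linarith)
  have hlim : ∀ a : ℝ, Tendsto (fun x => c + a * (x - x₀) ^ ℓ) (𝓝[>] x₀) (𝓝 c) := fun a => by
    have hc : Continuous fun x => c + a * (x - x₀) ^ ℓ := by fun_prop
    have := hc.tendsto x₀
    simp only [sub_self, zero_pow (by omega : ℓ ≠ 0), mul_zero, add_zero] at this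
    exact this.mono_left nhdsWithin_le_nhds
  have hsup0 : c ≤ sSup S := by
    refine le_of_tendsto (hlim (d - η)) (hmem.mono fun x hx => ?_)
    exact le_trans (by linarith [(abs_le.1 (h x hx)).1]) (le_csSup hA (mem_image_of_mem g hx))
  have hinf0 : sInf S ≤ c := by
    refine ge_of_tendsto (hlim (d + η)) (hmem.mono fun x hx => ?_)
    exact le_trans (csInf_le hB (mem_image_of_mem g hx)) (by linarith [(abs_le.1 (h x hx)).2])
  have hηε : 0 ≤ η * ε ^ ℓ := mul_nonneg hη hpow.le
  rw [abs_le]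
  rcases le_total 0 d with hd | hd
  · rw [abs_of_nonneg hd]
    rw [max_eq_left hd] at hsup
    rw [min_eq_right hd] at hinf
    constructor <;> linarith
  · rw [abs_of_nonpos hd]
    rw [max_eq_right hd] at hsup
    rw [min_eq_left hd] at hinf
    constructor <;> linarith

open Filter Topology in
lemma taylorRemainder_isLittleO {k ℓ : ℕ} (hℓ : 1 ≤ ℓ) {f : ℝ → ℝ} {x₀ : ℝ}
    (hf : ContDiff ℝ (k + ℓ : ℕ) f)
    (hmin : ∀ j : ℕ, 1 ≤ j → j < ℓ → iteratedDeriv (k + j) f x₀ = 0) :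
    (fun x => taylorRemainder f x₀ k x - (iteratedDeriv k f x₀ / (k.factorial : ℝ) +
      iteratedDeriv (k + ℓ) f x₀ / ((k + ℓ).factorial : ℝ) * (x - x₀) ^ ℓ) * (x - x₀) ^ k)
      =o[𝓝 x₀] fun x => (x - x₀) ^ (k + ℓ) := by
  refine (taylor_isLittleO_univ (x₀ := x₀) hf).congr_left fun x => ?_
  obtain ⟨m, rfl⟩ : ∃ m, ℓ = m + 1 := ⟨ℓ - 1, by omega⟩
  have hmid : ∑ j ∈ Finset.range m, (((k + (j + 1)).factorial : ℝ)⁻¹ * (x - x₀) ^ (k + (j + 1))) *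
      iteratedDeriv (k + (j + 1)) f x₀ = 0 :=
    Finset.sum_eq_zero fun j hj => by
      rw [hmin (j + 1) (by omega) (by have := Finset.mem_range.1 hj; omega), mul_zero]
  simp only [taylor_within_apply, iteratedDerivWithin_univ, smul_eq_mul, taylorRemainder]
  rw [Finset.sum_range_succ, Finset.sum_range_add, Finset.sum_range_succ' _ m, hmid]
  have hlow : ∑ i ∈ Finset.range k, iteratedDeriv i f x₀ * (x - x₀) ^ i / (i.factorial : ℝ) =
      ∑ i ∈ Finset.range k, ((i.factorial : ℝ)⁻¹ * (x - x₀) ^ i) * iteratedDeriv i f x₀ :=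
    Finset.sum_congr rfl fun i _ => by ring
  rw [hlow, add_zero k, pow_add (x - x₀) k (m + 1)]
  ring

/-- for analytic `f` that is not a polynomial of degree `≤ k`, with `ℓ` the
smallest positive integer such that `f⁽ᵏ⁺ˡ⁾(x₀) ≠ 0`, the width of the sharp enclosure
interval over `[x₀, x₀ + ε]`, divided by `ε^ℓ`, tends to `|f⁽ᵏ⁺ˡ⁾(x₀)| / (k + ℓ)!`
as `ε → 0⁺`. -/
theorem sharp_width_asymptotics (k ℓ : ℕ) (hk : 1 ≤ k) (hℓ : 1 ≤ ℓ)
    (f : ℝ → ℝ) (x₀ : ℝ) (hf : ∀ x : ℝ, AnalyticAt ℝ f x)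
    (hpoly : ¬ ∃ p : Polynomial ℝ, p.natDegree ≤ k ∧ ∀ x : ℝ, f x = p.eval x)
    (hne : iteratedDeriv (k + ℓ) f x₀ ≠ 0)
    (hmin : ∀ j : ℕ, 1 ≤ j → j < ℓ → iteratedDeriv (k + j) f x₀ = 0) :
    Filter.Tendsto
      (fun ε : ℝ =>
        (1 / ε ^ ℓ) *
          (sSup ((fun x => taylorRemainder f x₀ k x / (x - x₀) ^ k) '' Set.Ioc x₀ (x₀ + ε)) -
            sInf ((fun x => taylorRemainder f x₀ k x / (x - x₀) ^ k) '' Set.Ioc x₀ (x₀ + ε))))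
      (nhdsWithin 0 (Set.Ioi 0))
      (nhds (|iteratedDeriv (k + ℓ) f x₀| / ((k + ℓ).factorial : ℝ))) := by
  have hcd : ContDiff ℝ (k + ℓ : ℕ) f := contDiff_iff_contDiffAt.2 fun x => (hf x).contDiffAt
  have ho := taylorRemainder_isLittleO hℓ hcd hmin
  rw [show |iteratedDeriv (k + ℓ) f x₀| / ((k + ℓ).factorial : ℝ) =
    |iteratedDeriv (k + ℓ) f x₀ / ((k + ℓ).factorial : ℝ)| by rw [abs_div, Nat.abs_cast]]
  set c := iteratedDeriv k f x₀ / (k.factorial : ℝ)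
  set d := iteratedDeriv (k + ℓ) f x₀ / ((k + ℓ).factorial : ℝ)
  rw [Metric.tendsto_nhdsWithin_nhds]
  intro r hr
  -- `η = r / 4` makes the error `2 η` of `abs_width_sub_le` strictly smaller than `r`.
  obtain ⟨δ, hδ, hball⟩ := Metric.eventually_nhds_iff.1 (ho.def (show 0 < r / 4 by linarith))
  refine ⟨δ, hδ, fun {ε} hε hεδ => ?_⟩
  have hε0 : 0 < ε := hε
  rw [Real.dist_eq, sub_zero, abs_of_pos hε0] at hεδ
  have hpow : 0 < ε ^ ℓ := pow_pos hε0 ℓ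
  have hw := abs_width_sub_le (g := fun x => taylorRemainder f x₀ k x / (x - x₀) ^ k)
    (x₀ := x₀) (c := c) (d := d) hℓ (show 0 ≤ r / 4 by linarith) hε0 fun x hx => by
      have ht : 0 < x - x₀ := by linarith [hx.1]
      have htk : 0 < (x - x₀) ^ k := pow_pos ht k
      have hb := hball (y := x) (by rw [Real.dist_eq, abs_of_pos ht]; linarith [hx.2])
      rw [Real.norm_eq_abs, Real.norm_eq_abs, abs_of_pos (pow_pos ht (k + ℓ)), pow_add] at hb
      rw [div_sub' htk.ne', abs_div, abs_of_pos htk, div_le_iff₀ htk,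
        mul_comm ((x - x₀) ^ k) (c + d * (x - x₀) ^ ℓ)]
      linarith
  rw [Real.dist_eq]
  set W := sSup ((fun x => taylorRemainder f x₀ k x / (x - x₀) ^ k) '' Set.Ioc x₀ (x₀ + ε)) -
    sInf ((fun x => taylorRemainder f x₀ k x / (x - x₀) ^ k) '' Set.Ioc x₀ (x₀ + ε))
  rw [show 1 / ε ^ ℓ * W - |d| = (W - |d| * ε ^ ℓ) / ε ^ ℓ by field_simp, abs_div,
    abs_of_pos hpow, div_lt_iff₀ hpow]
  have : 0 < r * ε ^ ℓ := mul_pos hr hpow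
  linarith
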